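/- Let I be a nonzero ideal of ℤ[1/2], let a ∈ ℚ^× satisfy v_p(a) = 0 for every prime p with I ⊆ pℤ[1/2], and let s₁,…,s_r ∈ ℤ[1/2] be elements that are not squares in ℚ. Then there exist: an element t ∈ ℤ[1/2] with t > 0 that is not a square in ℚ; elements x, y ∈ ℤ[1/2] with x² + t·y² = 1; and, for each prime p with I ⊆ pℤ[1/2], an element ζ_p ∈ ℤ_p with ζ_p² = −t; such that: (1) for every 1 ≤ i ≤ r, s_i is not a square in the field ℚ(√−t); and (2) for every prime p with I ⊆ pℤ[1/2], v_p((x + y·ζ_p)·a⁻¹ − 1) ≥ v_p(I), where v_p(I) := max{e ∈ ℕ : I ⊆ p^e ℤ[1/2]}. -/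

import Mathlib

/-- The ring `ℤ[1/2]`, realized as the smallest subring of `ℚ` containing `1/2`. -/
def Zhalf : Subring ℚ := Subring.closure {(2 : ℚ)⁻¹}

/-!
For `x ∈ ℤ[1/2]` with `0 < x < 1`, the element `t = 1 - x²` is positive and `x² + t · 1² = 1`. A
unit `v` of `ℤ_p` equals `x + ζ` with `ζ² = -t` exactly when `v` is a root of `X² - 2xX + 1`, that
is, when `2x = v + v⁻¹`. So take `u ∈ ℤ[1/2]` with `0 < u < 1` and `u ≡ a` modulo `I = (N)`, and
let `x` solve `2xu ≡ u² + 1` modulo `N(u² - 1)²`: by Hensel's lemma `X² - 2xX + 1` has a root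
congruent to `u` modulo `N` in every `ℤ_p` with `p ∣ N`. The congruence leaves enough freedom to
impose also `0 < x < 1`, as `ℤ[1/2]` is dense in `ℚ`, and `v_q(t) = 1` for some large prime `q`.
Then neither `t` nor any `-t sᵢ` is a square in `ℚ`, hence no `sᵢ` is a square in `ℚ(√-t)`.
-/

open Filter Polynomial IntermediateField

section QuadraticField

variable {F L : Type*} [Field F] [Field L] [Algebra F L] {d : F} {z : L}

theorem exists_eq_add_mul_of_mem_adjoin_of_sq_eq (hz : z ^ 2 = algebraMap F L d) {w : L}
    (hw : w ∈ F⟮z⟯) : ∃ u v : F, w = algebraMap F L u + algebraMap F L v * z := by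
  have hroot : aeval z (X ^ 2 - C d) = 0 := by simp [hz]
  have hmonic : (X ^ 2 - C d).Monic := monic_X_pow_sub_C d two_ne_zero
  rw [← mem_toSubalgebra, adjoin_simple_toSubalgebra_of_isAlgebraic ⟨_, hmonic.ne_zero, hroot⟩,
    Algebra.adjoin_singleton_eq_range_aeval] at hw
  obtain ⟨f, rfl⟩ := hw
  have hdeg : (f %ₘ (X ^ 2 - C d)).natDegree < 2 := by
    simpa using natDegree_modByMonic_lt f hmonic (fun h => by simpa using congrArg natDegree h)
  obtain ⟨v, u, huv⟩ := exists_eq_X_add_C_of_natDegree_le_one (Nat.lt_succ_iff.mp hdeg)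
  refine ⟨u, v, ?_⟩
  change aeval z f = _
  rw [← aeval_modByMonic_eq_self_of_root hroot, huv]
  simp [add_comm]

theorem isSquare_or_isSquare_mul_of_mem_adjoin [NeZero (2 : F)] (hz : z ^ 2 = algebraMap F L d)
    {w : L} (hw : w ∈ F⟮z⟯) {s : F} (hs : w ^ 2 = algebraMap F L s) :
    IsSquare s ∨ IsSquare (d * s) := by
  obtain ⟨u, v, rfl⟩ := exists_eq_add_mul_of_mem_adjoin_of_sq_eq hz hw
  have inj := (algebraMap F L).injective
  have hcross : algebraMap F L (2 * u * v) * z = algebraMap F L (s - u ^ 2 - d * v ^ 2) := by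
    simp only [map_mul, map_sub, map_pow, map_ofNat]
    linear_combination hs - algebraMap F L v ^ 2 * hz
  by_cases huv : 2 * u * v = 0
  · have hsuv : s = u ^ 2 + d * v ^ 2 := by
      rw [huv, map_zero, zero_mul, eq_comm, map_eq_zero_iff _ inj] at hcross
      linear_combination hcross
    rcases mul_eq_zero.mp huv with hu | rfl
    · obtain rfl : u = 0 := (mul_eq_zero.mp hu).resolve_left two_ne_zero
      exact .inr ⟨d * v, by rw [hsuv]; ring⟩
    · exact .inl ⟨u, by rw [hsuv]; ring⟩
  · left
    refine ⟨u + v * ((s - u ^ 2 - d * v ^ 2) / (2 * u * v)), inj ?_⟩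
    have hz' : z = algebraMap F L ((s - u ^ 2 - d * v ^ 2) / (2 * u * v)) := by
      rw [map_div₀, ← hcross, mul_div_cancel_left₀ _ (by simpa [map_eq_zero_iff _ inj] using huv)]
    rw [← hs, hz']
    simp only [map_mul, map_add]
    ring

end QuadraticField

theorem not_isSquare_of_odd_padicValRat {q : ℕ} [Fact q.Prime] {t : ℚ}
    (h : Odd (padicValRat q t)) : ¬ IsSquare t := by
  rintro ⟨w, rfl⟩
  rw [← sq, padicValRat.pow] at h
  exact Int.not_even_iff_odd.mpr h ⟨padicValRat q w, by push_cast; ring⟩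

theorem sq_ne_of_mem_adjoin_of_odd_padicValRat {L : Type*} [Field L] [CharZero L] {q : ℕ}
    [Fact q.Prime] {d s : ℚ} (hd : Odd (padicValRat q d)) (hqs : padicValRat q s = 0)
    (hs : ∀ w : ℚ, w ^ 2 ≠ s) {z : L} (hz : z ^ 2 = d) {w : L} (hw : w ∈ ℚ⟮z⟯) : w ^ 2 ≠ s := by
  intro hws
  rcases isSquare_or_isSquare_mul_of_mem_adjoin hz hw hws with ⟨v, hv⟩ | hds
  · exact hs v (by rw [hv, sq])
  · have hd0 : d ≠ 0 := by
      rintro rfl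
      simp at hd
    have hs0 : s ≠ 0 := fun h => hs 0 (by rw [h, zero_pow two_ne_zero])
    refine not_isSquare_of_odd_padicValRat (q := q) ?_ hds
    rwa [padicValRat.mul hd0 hs0, hqs, add_zero]

theorem eventually_padicValRat_eq_zero (s : ℚ) : ∀ᶠ q : ℕ in atTop, padicValRat q s = 0 := by
  rcases eq_or_ne s 0 with rfl | hs
  · simp
  filter_upwards [eventually_gt_atTop s.num.natAbs, eventually_gt_atTop s.den] with q hnum hden
  rw [padicValRat_def, padicValInt, padicValNat.eq_zero_of_not_dvd, padicValNat.eq_zero_of_not_dvd]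
  · simp
  · exact Nat.not_dvd_of_pos_of_lt s.den_pos hden
  · exact Nat.not_dvd_of_pos_of_lt (Int.natAbs_pos.mpr (Rat.num_ne_zero.mpr hs)) hnum

theorem not_dvd_num_and_not_dvd_den {p : ℕ} [Fact p.Prime] {a : ℚ} (ha : a ≠ 0)
    (h : padicValRat p a = 0) : ¬ p ∣ a.num.natAbs ∧ ¬ p ∣ a.den := by
  have hnum : a.num.natAbs ≠ 0 := Int.natAbs_ne_zero.mpr (Rat.num_ne_zero.mpr ha)
  have hcop : ¬ (p ∣ a.num.natAbs ∧ p ∣ a.den) := fun ⟨h₁, h₂⟩ =>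
    Nat.not_coprime_of_dvd_of_dvd (Fact.out : p.Prime).one_lt h₁ h₂ a.reduced
  rw [padicValRat_def, padicValInt] at h
  rw [dvd_iff_padicValNat_ne_zero hnum, dvd_iff_padicValNat_ne_zero a.den_ne_zero] at hcop ⊢
  omega

theorem norm_ratCast_eq_one_iff {p : ℕ} [Fact p.Prime] {a : ℚ} (ha : a ≠ 0) :
    ‖(a : ℚ_[p])‖ = 1 ↔ padicValRat p a = 0 := by
  have hp : (1 : ℝ) < p := mod_cast (Fact.out : p.Prime).one_lt
  rw [Padic.norm_eq_zpow_neg_valuation (mod_cast ha), Padic.valuation_ratCast,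
    zpow_eq_one_iff_right₀ (by positivity) hp.ne', neg_eq_zero]

theorem norm_mul_inv_sub_one_le {K : Type*} [NormedField K] [IsUltrametricDist K] {y u a : K}
    {r : ℝ} (ha : ‖a‖ = 1) (hy : ‖y - u‖ ≤ r) (hu : ‖u - a‖ ≤ r) : ‖y * a⁻¹ - 1‖ ≤ r := by
  have ha0 : a ≠ 0 := norm_ne_zero_iff.mp (by rw [ha]; exact one_ne_zero)
  calc ‖y * a⁻¹ - 1‖ = ‖(y - u) + (u - a)‖ := by
        rw [← mul_one ‖y * a⁻¹ - 1‖, ← ha, ← norm_mul, sub_mul, inv_mul_cancel_right₀ ha0, one_mul,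
          sub_add_sub_cancel]
    _ ≤ max ‖y - u‖ ‖u - a‖ := IsUltrametricDist.norm_add_le_max _ _
    _ ≤ r := max_le hy hu

section Hensel

variable {p : ℕ} [Fact p.Prime]

theorem exists_eval_eq_zero_and_norm_sub_mul_norm_eq {f : ℤ_[p][X]} {u : ℤ_[p]}
    (h : ‖f.eval u‖ < ‖f.derivative.eval u‖ ^ 2) :
    ∃ z : ℤ_[p], f.eval z = 0 ∧ ‖z - u‖ * ‖f.derivative.eval u‖ = ‖f.eval u‖ := by
  obtain ⟨z, hz, hzu, -, -⟩ := hensels_lemma (R := ℤ_[p]) (F := f) (a := u) (by simpa using h)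
  rw [coe_aeval_eq_eval] at hz hzu
  refine ⟨z, hz, ?_⟩
  obtain ⟨k, hk⟩ := f.binomExpansion u (z - u)
  rw [add_sub_cancel, hz] at hk
  have hsmall : ‖k * (z - u)‖ < ‖f.derivative.eval u‖ := by
    rw [norm_mul]
    exact (mul_le_of_le_one_left (norm_nonneg _) k.norm_le_one).trans_lt hzu
  have hfactor : f.eval u = -((z - u) * (f.derivative.eval u + k * (z - u))) := by
    linear_combination -hk
  rw [hfactor, norm_neg, norm_mul, PadicInt.norm_add_eq_max_of_ne hsmall.ne',
    max_eq_left hsmall.le]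

theorem exists_sq_eq_sq_sub_one_and_norm_le {u x : ℤ_[p]}
    (h : ‖u ^ 2 - 2 * x * u + 1‖ < ‖u ^ 2 - 1‖ ^ 2) :
    ∃ ζ : ℤ_[p], ζ ^ 2 = x ^ 2 - 1 ∧
      ‖x + ζ - u‖ * ‖u ^ 2 - 1‖ ≤ ‖u ^ 2 - 2 * x * u + 1‖ := by
  let f : ℤ_[p][X] := X ^ 2 - C (2 * x) * X + 1
  have hf (v : ℤ_[p]) : f.eval v = v ^ 2 - 2 * x * v + 1 := by simp [f]
  have hf' : f.derivative.eval u = 2 * (u - x) := by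
    simp only [f, derivative_add, derivative_sub, derivative_X_pow, derivative_C_mul, derivative_X,
      derivative_one, eval_add, eval_sub, eval_mul, eval_pow, eval_X, eval_C, eval_one, eval_zero]
    ring
  have hlt : ‖u ^ 2 - 2 * x * u + 1‖ < ‖u ^ 2 - 1‖ :=
    h.trans_le (pow_le_of_le_one (norm_nonneg _) (PadicInt.norm_le_one _) two_ne_zero)
  have hderiv : ‖u ^ 2 - 1‖ ≤ ‖f.derivative.eval u‖ :=
    calc ‖u ^ 2 - 1‖ = ‖u ^ 2 - 1 + (u ^ 2 - 2 * x * u + 1)‖ := by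
          rw [PadicInt.norm_add_eq_max_of_ne hlt.ne', max_eq_left hlt.le]
      _ = ‖u‖ * ‖f.derivative.eval u‖ := by rw [← norm_mul, hf']; ring_nf
      _ ≤ ‖f.derivative.eval u‖ := mul_le_of_le_one_left (norm_nonneg _) u.norm_le_one
  obtain ⟨v, hv, hvu⟩ := exists_eval_eq_zero_and_norm_sub_mul_norm_eq (f := f) (u := u) <| by
    rw [hf]
    exact h.trans_le (pow_le_pow_left₀ (norm_nonneg _) hderiv 2)
  rw [hf] at hv hvu
  refine ⟨v - x, by linear_combination hv, ?_⟩
  rw [add_sub_cancel, ← hvu]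
  exact mul_le_mul_of_nonneg_left hderiv (norm_nonneg _)

end Hensel

namespace Zhalf

theorem two_inv_mem : (2 : ℚ)⁻¹ ∈ Zhalf := Subring.subset_closure rfl

theorem isUnit_two : IsUnit (2 : Zhalf) :=
  IsUnit.of_mul_eq_one ⟨2⁻¹, two_inv_mem⟩ (Subtype.ext (mul_inv_cancel₀ two_ne_zero))

theorem exists_two_pow_mul_eq_intCast (x : Zhalf) : ∃ (k : ℕ) (n : ℤ), 2 ^ k * x = n := by
  obtain ⟨x, hx⟩ := x
  suffices h : ∃ (k : ℕ) (n : ℤ), 2 ^ k * x = n from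
    h.imp fun k => Exists.imp fun n hn => Subtype.ext hn
  induction hx using Subring.closure_induction with
  | mem x hx => exact ⟨1, 1, by rw [Set.mem_singleton_iff.mp hx]; norm_num⟩
  | zero => exact ⟨0, 0, by simp⟩
  | one => exact ⟨0, 1, by simp⟩
  | add x y _ _ hx hy =>
    obtain ⟨k, m, hm⟩ := hx
    obtain ⟨l, n, hn⟩ := hy
    refine ⟨k + l, 2 ^ l * m + 2 ^ k * n, ?_⟩
    push_cast
    linear_combination 2 ^ l * hm + 2 ^ k * hn
  | neg x _ hx =>
    obtain ⟨k, n, hn⟩ := hx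
    exact ⟨k, -n, by push_cast; linear_combination -hn⟩
  | mul x y _ _ hx hy =>
    obtain ⟨k, m, hm⟩ := hx
    obtain ⟨l, n, hn⟩ := hy
    refine ⟨k + l, m * n, ?_⟩
    push_cast
    linear_combination 2 ^ l * y * hm + m * hn

theorem exists_intCast_span_singleton_eq (I : Ideal Zhalf) :
    ∃ n : ℤ, I = Ideal.span {(n : Zhalf)} := by
  obtain ⟨n, hn⟩ := IsPrincipalIdealRing.principal (I.comap (Int.castRingHom Zhalf))
  have mem_iff (m : ℤ) : (m : Zhalf) ∈ I ↔ n ∣ m := by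
    rw [← Ideal.mem_span_singleton, ← Ideal.submodule_span_eq, ← hn]
    rfl
  refine ⟨n, le_antisymm (fun x hx => ?_) ?_⟩
  · obtain ⟨k, m, hm⟩ := exists_two_pow_mul_eq_intCast x
    have hdvd : n ∣ m := (mem_iff m).mp (hm ▸ I.mul_mem_left _ hx)
    rw [Ideal.mem_span_singleton, ← (isUnit_two.pow k).dvd_mul_left, hm]
    exact map_dvd (Int.castRingHom Zhalf) hdvd
  · rw [Ideal.span_singleton_le_iff_mem]
    exact (mem_iff n).mpr dvd_rfl

theorem exists_odd_span_singleton_eq {I : Ideal Zhalf} (hI : I ≠ ⊥) :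
    ∃ N : ℕ, Odd N ∧ I = Ideal.span {(N : Zhalf)} := by
  obtain ⟨n, rfl⟩ := exists_intCast_span_singleton_eq I
  have hn : n.natAbs ≠ 0 := by
    intro h
    simp [Int.natAbs_eq_zero.mp h] at hI
  obtain ⟨k, N, hN, hnN⟩ := Nat.exists_eq_two_pow_mul_odd hn
  refine ⟨N, hN, ?_⟩
  have habs : Associated (n : Zhalf) (n.natAbs : Zhalf) := by
    simpa only [eq_intCast, Int.cast_natCast] using n.associated_natAbs.map (Int.castRingHom Zhalf)
  rw [Ideal.span_singleton_eq_span_singleton.mpr habs, hnN]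
  push_cast
  exact Ideal.span_singleton_mul_left_unit (isUnit_two.pow k) _

theorem dense : Dense (Zhalf : Set ℚ) := by
  refine AddSubgroup.dense_of_not_isolated_zero Zhalf.toAddSubgroup fun ε hε => ?_
  obtain ⟨k, hk⟩ := exists_pow_lt_of_lt_one hε (by norm_num : (2 : ℚ)⁻¹ < 1)
  exact ⟨2⁻¹ ^ k, pow_mem two_inv_mem k, by positivity, hk⟩

theorem exists_dvd_sub_and_mem_of_isOpen {M : Zhalf} (hM : M ≠ 0) (b : Zhalf) {U : Set ℚ}
    (hU : IsOpen U) (hne : U.Nonempty) : ∃ x : Zhalf, M ∣ x - b ∧ (x : ℚ) ∈ U := by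
  have hM' : (M : ℚ) ≠ 0 := mod_cast hM
  obtain ⟨c, hc⟩ := hne
  obtain ⟨y, hyU, hy⟩ := dense.inter_open_nonempty ((fun y : ℚ => b + M * y) ⁻¹' U)
    (hU.preimage (by fun_prop)) ⟨(c - b) / M, by simpa [mul_div_cancel₀ _ hM'] using hc⟩
  let y' : Zhalf := ⟨y, hy⟩
  exact ⟨b + M * y', ⟨y', add_sub_cancel_left _ _⟩, hyU⟩

theorem eventually_isCoprime_of_prime {M : Zhalf} (hM : M ≠ 0) :
    ∀ᶠ q : ℕ in atTop, q.Prime → IsCoprime (q : Zhalf) M := by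
  obtain ⟨k, n, hn⟩ := exists_two_pow_mul_eq_intCast M
  have hn0 : 0 < n.natAbs := by
    refine Int.natAbs_pos.mpr ?_
    rintro rfl
    exact mul_ne_zero (isUnit_two.pow k).ne_zero hM (by simpa using hn)
  filter_upwards [eventually_gt_atTop n.natAbs] with q hq hprime
  have hcop : IsCoprime (q : ℤ) n := by
    rw [Int.isCoprime_iff_nat_coprime, Int.natAbs_natCast]
    exact hprime.coprime_iff_not_dvd.mpr (Nat.not_dvd_of_pos_of_lt hn0 hq)
  have := hcop.map (Int.castRingHom Zhalf)
  rw [eq_intCast, eq_intCast, Int.cast_natCast, ← hn] at this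
  exact this.of_mul_right_right

section Padic

variable {p : ℕ} [Fact p.Prime]

theorem norm_ratCast_le_one (hp : p ≠ 2) (x : Zhalf) : ‖((x : ℚ) : ℚ_[p])‖ ≤ 1 := by
  have hle : Zhalf ≤ (PadicInt.subring p).comap (Rat.castHom ℚ_[p]) := by
    refine Subring.closure_le.mpr (Set.singleton_subset_iff.mpr (Padic.norm_rat_le_one ?_))
    rw [Rat.inv_ofNat_den]
    exact mt (Nat.prime_dvd_prime_iff_eq Fact.out Nat.prime_two).mp hp
  exact hle x.2

/-- The embedding of `ℤ[1/2]` into `ℤ_p` for an odd prime `p`, which turns divisibility in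
`ℤ[1/2]` into inequalities of `p`-adic norms. -/
noncomputable def toPadicInt (hp : p ≠ 2) : Zhalf →+* ℤ_[p] :=
  ((Rat.castHom ℚ_[p]).comp Zhalf.subtype).codRestrict (PadicInt.subring p)
    (norm_ratCast_le_one hp)

theorem coe_toPadicInt (hp : p ≠ 2) (x : Zhalf) :
    (toPadicInt hp x : ℚ_[p]) = ((x : ℚ) : ℚ_[p]) := rfl

theorem norm_toPadicInt_le_of_dvd (hp : p ≠ 2) {x y : Zhalf} (h : x ∣ y) :
    ‖toPadicInt hp y‖ ≤ ‖toPadicInt hp x‖ := by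
  obtain ⟨z, hz⟩ := map_dvd (toPadicInt hp) h
  rw [hz, norm_mul]
  exact mul_le_of_le_one_right (norm_nonneg _) (PadicInt.norm_le_one z)

theorem norm_natCast_le_zpow_of_dvd (hp : p ≠ 2) {n e : ℕ} (h : (p : Zhalf) ^ e ∣ n) :
    ‖(n : ℚ_[p])‖ ≤ (p : ℝ) ^ (-(e : ℤ)) := by
  have := norm_toPadicInt_le_of_dvd hp h
  rwa [map_pow, map_natCast, map_natCast, PadicInt.norm_p_pow] at this

theorem dvd_of_natCast_dvd_natCast (hp : p ≠ 2) {n : ℕ} (h : (p : Zhalf) ∣ n) : p ∣ n := by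
  rw [← Padic.norm_natCast_lt_one_iff]
  refine (norm_natCast_le_zpow_of_dvd hp (by rwa [pow_one])).trans_lt ?_
  exact zpow_lt_one_of_neg₀ (mod_cast (Fact.out : p.Prime).one_lt) (by norm_num)

theorem padicValRat_one_sub_sq (hp : p ≠ 2) {x : Zhalf} (h : (p : Zhalf) ^ 2 ∣ x - (1 + p)) :
    padicValRat p (1 - (x : ℚ) ^ 2) = 1 := by
  obtain ⟨z, hz⟩ := h
  have hprime : p.Prime := Fact.out
  let w : Zhalf := 2 + p * ((1 + p * z) ^ 2 + 2 * z)
  have hfactor : 1 - (x : ℚ) ^ 2 = -(p * w) := by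
    have : 1 - x ^ 2 = -(p * w) := by
      rw [eq_add_of_sub_eq' hz]
      ring
    exact_mod_cast congrArg Subtype.val this
  have htwo : ‖(2 : ℤ_[p])‖ = 1 := by
    exact_mod_cast PadicInt.norm_natCast_eq_one_iff.mpr
      ((Nat.coprime_primes hprime Nat.prime_two).mpr hp)
  have hsmall : ‖(p * toPadicInt hp ((1 + p * z) ^ 2 + 2 * z) : ℤ_[p])‖ < 1 :=
    (PadicInt.norm_lt_one_iff_dvd _).mpr (dvd_mul_right _ _)
  have hw : ‖((w : ℚ) : ℚ_[p])‖ = 1 := by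
    rw [← coe_toPadicInt hp, ← PadicInt.norm_def, map_add, map_mul, map_natCast, map_ofNat,
      PadicInt.norm_add_eq_max_of_ne (by rw [htwo]; exact hsmall.ne'), htwo, max_eq_left hsmall.le]
  have hw0 : (w : ℚ) ≠ 0 := by
    intro h0
    simp [h0] at hw
  rw [hfactor, padicValRat.neg, padicValRat.mul (mod_cast hprime.ne_zero) hw0,
    padicValRat.self hprime.one_lt, (norm_ratCast_eq_one_iff hw0).mp hw, add_zero]

end Padic

theorem exists_dvd_sub_and_prime_padicValRat_eq_one {P : Zhalf} (hP : P ≠ 0) (c : Zhalf)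
    {ι : Type*} [Finite ι] (s : ι → ℚ) :
    ∃ x : Zhalf, P ∣ x - c ∧ (x : ℚ) ∈ Set.Ioo 0 1 ∧ ∃ q : ℕ, q.Prime ∧
      padicValRat q (1 - (x : ℚ) ^ 2) = 1 ∧ ∀ i, padicValRat q (s i) = 0 := by
  obtain ⟨q, hq, ⟨hs, hqP⟩, hq2⟩ := ((Nat.frequently_atTop_iff_infinite.mpr
    Nat.infinite_setOfPred_prime).and_eventually (((eventually_all.mpr fun i =>
      eventually_padicValRat_eq_zero (s i)).and (eventually_isCoprime_of_prime hP)).and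
        (eventually_ne_atTop 2))).exists
  have : Fact q.Prime := ⟨hq⟩
  obtain ⟨α, β, hαβ⟩ := (hqP hq).pow_left (m := 2)
  have hM : (q : Zhalf) ^ 2 * P ≠ 0 :=
    mul_ne_zero (pow_ne_zero 2 (Nat.cast_ne_zero.mpr hq.ne_zero)) hP
  obtain ⟨x, hx, hx01⟩ := exists_dvd_sub_and_mem_of_isOpen hM (c * α * q ^ 2 + (1 + q) * β * P)
    isOpen_Ioo (Set.nonempty_Ioo.mpr (zero_lt_one (α := ℚ)))
  refine ⟨x, ?_, hx01, q, hq, padicValRat_one_sub_sq hq2 ?_, hs⟩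
  · obtain ⟨y, hy⟩ := hx
    exact ⟨q ^ 2 * y + (1 + q - c) * β, by linear_combination hy + c * hαβ⟩
  · obtain ⟨y, hy⟩ := hx
    exact ⟨P * y + (c - (1 + q)) * α, by linear_combination hy + (1 + q) * hαβ⟩

theorem exists_isCoprime_and_norm_sub_le {N : ℕ} (hN : N ≠ 0) {a : ℚ} (ha : a ≠ 0)
    (hva : ∀ p : ℕ, p.Prime → p ∣ N → padicValRat p a = 0) :
    ∃ u : Zhalf, (u : ℚ) ∈ Set.Ioo 0 1 ∧ IsCoprime u N ∧
      ∀ (p : ℕ) [Fact p.Prime], p ≠ 2 → p ∣ N → ‖((u : ℚ) : ℚ_[p]) - a‖ ≤ ‖(N : ℚ_[p])‖ := by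
  have hcop (p : ℕ) (hp : p.Prime) (hpN : p ∣ N) : ¬ p ∣ a.num.natAbs ∧ ¬ p ∣ a.den :=
    have : Fact p.Prime := ⟨hp⟩
    not_dvd_num_and_not_dvd_den ha (hva p hp hpN)
  have hden : IsCoprime (a.den : Zhalf) N :=
    (Nat.coprime_of_dvd fun p hp hpd hpN => (hcop p hp hpN).2 hpd).cast
  have hnum : IsCoprime (a.num : Zhalf) N := by
    have : IsCoprime a.num (N : ℤ) := Int.isCoprime_iff_nat_coprime.mpr
      (Nat.coprime_of_dvd fun p hp hpn hpN => (hcop p hp hpN).1 hpn)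
    simpa using this.map (Int.castRingHom Zhalf)
  obtain ⟨α, β, hαβ⟩ := hden
  obtain ⟨u, ⟨y, hy⟩, hu⟩ := exists_dvd_sub_and_mem_of_isOpen
    (Nat.cast_ne_zero.mpr hN) (α * a.num) isOpen_Ioo (Set.nonempty_Ioo.mpr (zero_lt_one (α := ℚ)))
  have hden_mul : a.den * u = a.num + N * (a.den * y - β * a.num) := by
    linear_combination a.den * hy + a.num * hαβ
  refine ⟨u, hu, ?_, fun p _ hp hpN => ?_⟩
  · refine IsCoprime.of_mul_left_right (x := (a.den : Zhalf)) ?_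
    rw [hden_mul]
    exact hnum.add_mul_left_left _
  · have hden : ‖(a.den : ℚ_[p])‖ = 1 := Padic.norm_natCast_eq_one_iff.mpr
      ((Nat.Prime.coprime_iff_not_dvd Fact.out).mpr (hcop p Fact.out hpN).2)
    calc ‖((u : ℚ) : ℚ_[p]) - a‖ = ‖(a.den : ℚ_[p]) * (((u : ℚ) : ℚ_[p]) - a)‖ := by
          rw [norm_mul, hden, one_mul]
      _ = ‖toPadicInt hp (a.den * u - a.num)‖ := by
          rw [PadicInt.norm_def, coe_toPadicInt]
          congr 1
          rw [mul_sub]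
          norm_cast
          simp
      _ ≤ ‖(N : ℚ_[p])‖ := by
          rw [← PadicInt.coe_natCast, ← PadicInt.norm_def, ← map_natCast (toPadicInt hp)]
          exact norm_toPadicInt_le_of_dvd hp (Dvd.intro _ (eq_sub_of_add_eq' hden_mul.symm))

theorem exists_dvd_and_prime_padicValRat_eq_one {N : ℕ} (hN : N ≠ 0) {u : Zhalf} (hu : u ^ 2 ≠ 1)
    (huN : IsCoprime u N) {ι : Type*} [Finite ι] (s : ι → ℚ) :
    ∃ x : Zhalf, (N : Zhalf) * (u ^ 2 - 1) ^ 2 ∣ u ^ 2 - 2 * x * u + 1 ∧ (x : ℚ) ∈ Set.Ioo 0 1 ∧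
      ∃ q : ℕ, q.Prime ∧ padicValRat q (1 - (x : ℚ) ^ 2) = 1 ∧ ∀ i, padicValRat q (s i) = 0 := by
  have hP : (N : Zhalf) * (u ^ 2 - 1) ^ 2 ≠ 0 :=
    mul_ne_zero (Nat.cast_ne_zero.mpr hN) (pow_ne_zero 2 (sub_ne_zero.mpr hu))
  have hcop : IsCoprime (2 * u) (N * (u ^ 2 - 1) ^ 2) := by
    have hu' : IsCoprime u (u ^ 2 - 1) := ⟨u, -1, by ring⟩
    exact (isCoprime_mul_unit_left_left isUnit_two _ _).mpr (huN.mul_right hu'.pow_right)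
  obtain ⟨α, β, hαβ⟩ := hcop
  obtain ⟨x, ⟨y, hy⟩, h⟩ := exists_dvd_sub_and_prime_padicValRat_eq_one hP (α * (u ^ 2 + 1)) s
  exact ⟨x, ⟨β * (u ^ 2 + 1) - 2 * u * y, by
    linear_combination -(u ^ 2 + 1) * hαβ - 2 * u * hy⟩, h⟩

theorem exists_sq_eq_sq_sub_one_and_norm_sub_le {p : ℕ} [Fact p.Prime] (hp : p ≠ 2) {N : ℕ}
    (hpN : p ∣ N) {u x : Zhalf} (hu : u ^ 2 ≠ 1)
    (hx : (N : Zhalf) * (u ^ 2 - 1) ^ 2 ∣ u ^ 2 - 2 * x * u + 1) :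
    ∃ ζ : ℤ_[p], ζ ^ 2 = toPadicInt hp x ^ 2 - 1 ∧
      ‖toPadicInt hp x + ζ - toPadicInt hp u‖ ≤ ‖(N : ℤ_[p])‖ := by
  have hinj : Function.Injective (toPadicInt hp) := fun y z h => Subtype.ext <|
    Rat.cast_injective (α := ℚ_[p]) (congrArg Subtype.val h)
  have hδ : 0 < ‖toPadicInt hp u ^ 2 - 1‖ := by
    rw [norm_pos_iff, sub_ne_zero, ← map_pow, ← map_one (toPadicInt hp)]
    exact hinj.ne hu
  have hF := norm_toPadicInt_le_of_dvd hp hx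
  simp only [map_mul, map_add, map_sub, map_pow, map_one, map_ofNat, map_natCast, norm_mul,
    norm_pow] at hF
  have hN : ‖(N : ℤ_[p])‖ < 1 := by
    simpa using Padic.norm_natCast_lt_one_iff.mpr hpN
  obtain ⟨ζ, hζ, hle⟩ := exists_sq_eq_sq_sub_one_and_norm_le
    (hF.trans_lt (mul_lt_of_lt_one_left (pow_pos hδ 2) hN))
  refine ⟨ζ, hζ, le_of_mul_le_mul_right ?_ hδ⟩
  calc _ ≤ ‖(N : ℤ_[p])‖ * ‖toPadicInt hp u ^ 2 - 1‖ ^ 2 := hle.trans hF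
    _ ≤ _ := mul_le_mul_of_nonneg_left
      (pow_le_of_le_one hδ.le (PadicInt.norm_le_one _) two_ne_zero) (norm_nonneg _)

theorem exists_sq_eq_neg_and_norm_mul_inv_sub_one_le {p : ℕ} [Fact p.Prime] (hp : p ≠ 2) {N : ℕ}
    (hpN : p ∣ N) {u x : Zhalf} (hu : u ^ 2 ≠ 1)
    (hx : (N : Zhalf) * (u ^ 2 - 1) ^ 2 ∣ u ^ 2 - 2 * x * u + 1) {a : ℚ_[p]} (ha : ‖a‖ = 1)
    (hua : ‖((u : ℚ) : ℚ_[p]) - a‖ ≤ ‖(N : ℚ_[p])‖) :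
    ∃ ζ : ℤ_[p], (ζ : ℚ_[p]) ^ 2 = -(((1 - x ^ 2 : Zhalf) : ℚ) : ℚ_[p]) ∧
      ‖(((x : ℚ) : ℚ_[p]) + ζ) * a⁻¹ - 1‖ ≤ ‖(N : ℚ_[p])‖ := by
  obtain ⟨ζ, hζ, hle⟩ := exists_sq_eq_sq_sub_one_and_norm_sub_le hp hpN hu hx
  refine ⟨ζ, ?_, norm_mul_inv_sub_one_le ha hle hua⟩
  have hζ' : ζ ^ 2 = -toPadicInt hp (1 - x ^ 2) := by
    rw [hζ, map_sub, map_one, map_pow, neg_sub]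
  exact congrArg Subtype.val hζ'

theorem exists_prime_padicValRat_eq_one_and_forall_exists_sq_eq {N : ℕ} (hN : N ≠ 0) {a : ℚ}
    (ha : a ≠ 0) (hva : ∀ p : ℕ, p.Prime → p ∣ N → padicValRat p a = 0) {ι : Type*} [Finite ι]
    (s : ι → ℚ) :
    ∃ x : Zhalf, (x : ℚ) ∈ Set.Ioo 0 1 ∧
      (∃ q : ℕ, q.Prime ∧ padicValRat q (1 - (x : ℚ) ^ 2) = 1 ∧ ∀ i, padicValRat q (s i) = 0) ∧
      ∀ (p : ℕ) [Fact p.Prime], ∃ ζ : ℤ_[p], p ≠ 2 → p ∣ N →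
        (ζ : ℚ_[p]) ^ 2 = -(((1 - x ^ 2 : Zhalf) : ℚ) : ℚ_[p]) ∧
        ‖(((x : ℚ) : ℚ_[p]) + ζ) * (a : ℚ_[p])⁻¹ - 1‖ ≤ ‖(N : ℚ_[p])‖ := by
  obtain ⟨u, hu01, huN, hua⟩ := exists_isCoprime_and_norm_sub_le hN ha hva
  have hu : u ^ 2 ≠ 1 := fun h =>
    (pow_lt_one₀ hu01.1.le hu01.2 two_ne_zero).ne (mod_cast congrArg Subtype.val h)
  obtain ⟨x, hxN, hx01, hq⟩ := exists_dvd_and_prime_padicValRat_eq_one hN hu huN s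
  refine ⟨x, hx01, hq, fun p _ => ?_⟩
  by_cases h : p ≠ 2 ∧ p ∣ N
  · obtain ⟨ζ, hζ⟩ := exists_sq_eq_neg_and_norm_mul_inv_sub_one_le h.1 h.2 hu hxN
      ((norm_ratCast_eq_one_iff ha).mpr (hva p Fact.out h.2)) (hua p h.1 h.2)
    exact ⟨ζ, fun _ _ => hζ⟩
  · exact ⟨0, fun hp hpN => absurd ⟨hp, hpN⟩ h⟩

end Zhalf

theorem stmt14_general (I : Ideal ↥Zhalf) (hI : I ≠ ⊥) (a : ℚ) (ha : a ≠ 0)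
    (hva : ∀ p : ℕ, p.Prime → p ≠ 2 → I ≤ Ideal.span {(p : ↥Zhalf)} → padicValRat p a = 0)
    {ι : Type*} [Finite ι] (s : ι → ℚ) (hs : ∀ i, ∀ w : ℚ, w ^ 2 ≠ s i) :
    ∃ (t x : ↥Zhalf) (ζ : ∀ (p : ℕ) (hp : p.Prime), @PadicInt p ⟨hp⟩),
      0 < (t : ℚ) ∧ (∀ w : ℚ, w ^ 2 ≠ (t : ℚ)) ∧ (x : ℚ) ^ 2 + (t : ℚ) = 1 ∧
      (∀ i, ∀ z : ℂ, z ^ 2 = -((t : ℚ) : ℂ) → ∀ w ∈ ℚ⟮z⟯, w ^ 2 ≠ (s i : ℂ)) ∧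
      (∀ (p : ℕ) (hp : p.Prime), p ≠ 2 → I ≤ Ideal.span {(p : ↥Zhalf)} →
        letI : Fact p.Prime := ⟨hp⟩
        (ζ p hp : ℚ_[p]) ^ 2 = -((t : ℚ) : ℚ_[p]) ∧
        ∀ e : ℕ, I ≤ Ideal.span {(p : ↥Zhalf)} ^ e →
          ‖(((x : ℚ) : ℚ_[p]) + (ζ p hp : ℚ_[p])) * (a : ℚ_[p])⁻¹ - 1‖ ≤ (p : ℝ) ^ (-(e : ℤ))) := by
  obtain ⟨N, hN, rfl⟩ := Zhalf.exists_odd_span_singleton_eq hI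
  have hva' (p : ℕ) (hp : p.Prime) (hpN : p ∣ N) : padicValRat p a = 0 :=
    hva p hp (hN.ne_two_of_dvd_nat hpN)
      (Ideal.span_singleton_le_span_singleton.mpr (Nat.cast_dvd_cast hpN))
  obtain ⟨x, hx01, ⟨q, hq, hqt, hqs⟩, hlocal⟩ :=
    Zhalf.exists_prime_padicValRat_eq_one_and_forall_exists_sq_eq hN.pos.ne' ha hva' s
  have : Fact q.Prime := ⟨hq⟩
  have hodd : Odd (padicValRat q (1 - (x : ℚ) ^ 2)) := hqt ▸ odd_one
  choose ζ hζ using hlocal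
  refine ⟨1 - x ^ 2, x, fun p hp => @ζ p ⟨hp⟩, ?_, fun w hw => ?_, add_sub_cancel _ _,
    fun i z hz w hw => ?_, fun p hp hp2 hpI => ?_⟩
  · exact sub_pos.mpr (pow_lt_one₀ hx01.1.le hx01.2 two_ne_zero)
  · exact not_isSquare_of_odd_padicValRat hodd ⟨w, by rw [← sq, hw]; rfl⟩
  · exact sq_ne_of_mem_adjoin_of_odd_padicValRat (padicValRat.neg (1 - (x : ℚ) ^ 2) ▸ hodd)
      (hqs i) (hs i) (by rw [hz]; push_cast; rfl) hw
  · have : Fact p.Prime := ⟨hp⟩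
    have hpN : p ∣ N :=
      Zhalf.dvd_of_natCast_dvd_natCast hp2 (Ideal.span_singleton_le_span_singleton.mp hpI)
    obtain ⟨hsq, hle⟩ := hζ p hp2 hpN
    refine ⟨hsq, fun e he => hle.trans (Zhalf.norm_natCast_le_zpow_of_dvd hp2 ?_)⟩
    rwa [Ideal.span_singleton_pow, Ideal.span_singleton_le_span_singleton] at he

theorem stmt14 (I : Ideal ↥Zhalf) (hI : I ≠ ⊥) (a : ℚ) (ha : a ≠ 0)
    (hva : ∀ p : ℕ, p.Prime → p ≠ 2 → I ≤ Ideal.span {(p : ↥Zhalf)} → padicValRat p a = 0)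
    (r : ℕ) (s : Fin r → ↥Zhalf) (hs : ∀ i : Fin r, ∀ w : ℚ, w ^ 2 ≠ ((s i : ℚ))) :
    ∃ (t x y : ↥Zhalf) (ζ : ∀ (p : ℕ) (hp : p.Prime), @PadicInt p ⟨hp⟩),
      0 < (t : ℚ) ∧ (∀ w : ℚ, w ^ 2 ≠ (t : ℚ)) ∧
      (x : ℚ) ^ 2 + (t : ℚ) * (y : ℚ) ^ 2 = 1 ∧
      -- (1): each `s i` is not a square in `ℚ(√−t)`
      (∀ i : Fin r, ∀ z : ℂ, z ^ 2 = -((t : ℚ) : ℂ) →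
        ∀ w ∈ IntermediateField.adjoin ℚ {z}, w ^ 2 ≠ ((s i : ℚ) : ℂ)) ∧
      -- for each odd prime `p` with `I ⊆ p ℤ[1/2]`: `ζ_p² = −t` and
      -- (2): `v_p((x + y ζ_p) a⁻¹ − 1) ≥ v_p(I)`
      (∀ (p : ℕ) (hp : p.Prime), p ≠ 2 → I ≤ Ideal.span {(p : ↥Zhalf)} →
        letI : Fact p.Prime := ⟨hp⟩
        (ζ p hp : ℚ_[p]) ^ 2 = -(((t : ℚ) : ℚ_[p])) ∧
        ∀ e : ℕ, I ≤ Ideal.span {(p : ↥Zhalf)} ^ e →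
          ‖(((x : ℚ) : ℚ_[p]) + ((y : ℚ) : ℚ_[p]) * (ζ p hp : ℚ_[p])) * ((a : ℚ_[p]))⁻¹ - 1‖
            ≤ (p : ℝ) ^ (-(e : ℤ))) := by
  obtain ⟨t, x, ζ, h⟩ := stmt14_general I hI a ha hva (fun i => (s i : ℚ)) hs
  exact ⟨t, x, 1, ζ, by simpa using h⟩
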